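/- (Main Theorem, case 0 < |q−1| small; Theorem 5.1) For every parameter tuple (n,m,k,l) as in the context, there exists ε > 0 with ε < 1 such that for every real number q with 0 < |q−1| < ε and every x ∈ {0,1,…,m}, one has p(x;q) ≥ 0; consequently, since Σ_{x=0}^{m} p(x;q) = 1, the function x ↦ p(x;q) is the probability mass function of a probability distribution on {0,1,…,m}. -/

import Mathlib

open Finset

/-- The `q`-integer `[j]_q = 1 + q + ⋯ + q^(j-1)`. -/
noncomputable def qint (q : ℝ) (j : ℕ) : ℝ := ∑ i ∈ Finset.range j, q ^ i

/-- The `q`-factorial `[j]_q! = [1]_q [2]_q ⋯ [j]_q`. -/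
noncomputable def qfact (q : ℝ) (j : ℕ) : ℝ := ∏ i ∈ Finset.range j, qint q (i + 1)

/-- The `q`-binomial coefficient `C_q(a,b)`. -/
noncomputable def qbinom (q : ℝ) (a b : ℕ) : ℝ :=
  if b ≤ a then qfact q a / (qfact q b * qfact q (a - b)) else 0

/-- The `q`-Pochhammer symbol `(a;q)_r = (1-a)(1-aq)⋯(1-aq^(r-1))`. -/
noncomputable def qpoch (a q : ℝ) (r : ℕ) : ℝ := ∏ i ∈ Finset.range r, (1 - a * q ^ i)

/-- The `r`-th term of the terminating balanced `₄φ₃`-series with numerator parameters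
`q^a, q^b, q^(-M), q^(-N)`, denominator parameters `q^(-m), q^(m-n), q^(-M-N)`,
base `q` and argument `q`. -/
noncomputable def hypTerm (q : ℝ) (n m M N : ℕ) (a b : ℤ) (r : ℕ) : ℝ :=
  (qpoch (q ^ a) q r * qpoch (q ^ b) q r * qpoch (q ^ (-(M : ℤ))) q r *
      qpoch (q ^ (-(N : ℤ))) q r * q ^ r) /
    (qpoch q q r * qpoch (q ^ (-(m : ℤ))) q r * qpoch (q ^ ((m : ℤ) - n)) q r *
      qpoch (q ^ (-(M : ℤ) - N)) q r)

/-- The function `p(x;q)` of Definition 1.1 (in its `₄φ₃`-series form), with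
`M = m - l` and `N = n - m - k + l`. -/
noncomputable def pq (q : ℝ) (n m k l x : ℕ) : ℝ :=
  qbinom q (n - k) (m - l) * (qbinom q n x / qbinom q n m) * q ^ x *
    (qint q (n - 2 * x + 1) / qint q (n - x + 1)) *
    ∑ r ∈ Finset.range (min x (min (m - l) (n + l - m - k)) + 1),
      hypTerm q n m (m - l) (n + l - m - k) (-(x : ℤ)) ((x : ℤ) - n - 1) r

lemma qpoch_succ (a q : ℝ) (r : ℕ) : qpoch a q (r+1) = qpoch a q r * (1 - a * q ^ r) := by
  simp [qpoch, Finset.prod_range_succ]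

lemma qpoch_zero (a q : ℝ) : qpoch a q 0 = 1 := by simp [qpoch]

lemma qpoch_shift (a q : ℝ) (r : ℕ) :
    (1 - a) * qpoch (a * q) q r = qpoch a q r * (1 - a * q ^ r) := by
  rw [← qpoch_succ]
  simp only [qpoch]
  rw [Finset.prod_range_succ']
  simp only [pow_zero, mul_one]
  rw [mul_comm]
  congr 1
  apply Finset.prod_congr rfl
  intro i _
  ring

lemma zpow_ne1 {q : ℝ} (hq : 0 < q) (hq1 : q ≠ 1) {j : ℤ} (hj : j ≠ 0) : q ^ j ≠ 1 := by
  intro h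
  exact (zpow_right_injective₀ hq hq1).ne hj (by simpa using h)

lemma qpoch_ne {q : ℝ} (hq : 0 < q) (hq1 : q ≠ 1) (j r : ℕ) (h : r ≤ j) :
    qpoch (q ^ (-(j:ℤ))) q r ≠ 0 := by
  simp only [qpoch]
  rw [Finset.prod_ne_zero_iff]
  intro i hi
  have hi := Finset.mem_range.1 hi
  rw [← zpow_natCast, ← zpow_add₀ hq.ne']
  exact sub_ne_zero.2 (zpow_ne1 hq hq1 (by omega)).symm

lemma qpoch_q_ne {q : ℝ} (hq : 0 < q) (hq1 : q ≠ 1) (r : ℕ) :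
    qpoch q q r ≠ 0 := by
  simp only [qpoch]
  rw [Finset.prod_ne_zero_iff]
  intro i _
  have : q * q ^ i = q ^ ((i:ℤ)+1) := by
    rw [zpow_add₀ hq.ne', zpow_one, zpow_natCast, mul_comm]
  rw [this]
  exact sub_ne_zero.2 (zpow_ne1 hq hq1 (by omega)).symm

lemma qpoch_eq_zero {q : ℝ} (hq : 0 < q) (j r : ℕ) (h : j < r) :
    qpoch (q ^ (-(j:ℤ))) q r = 0 := by
  simp only [qpoch]
  apply Finset.prod_eq_zero (Finset.mem_range.2 h)
  rw [← zpow_natCast, ← zpow_add₀ hq.ne']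
  simp

/-- Gosper summation. -/
lemma gosper {q : ℝ} (hq : 0 < q) (hq1 : q ≠ 1) (a b : ℝ) (R : ℕ)
    (h : qpoch (a*b*q) q R ≠ 0) :
    ∑ r ∈ Finset.range (R+1), qpoch a q r * qpoch b q r * q ^ r /
      (qpoch q q r * qpoch (a*b*q) q r) =
      qpoch (a*q) q R * qpoch (b*q) q R / (qpoch q q R * qpoch (a*b*q) q R) := by
  induction R with
  | zero => simp [qpoch_zero]
  | succ R ih =>
    have h2 := h
    rw [qpoch_succ] at h2
    have h3 := left_ne_zero_of_mul h2
    have h4 := right_ne_zero_of_mul h2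
    have h5 := qpoch_q_ne hq hq1 (R+1)
    have h6 := qpoch_q_ne hq hq1 R
    have h7 := h5
    rw [qpoch_succ] at h7
    have h8 := right_ne_zero_of_mul h7
    rw [Finset.sum_range_succ, ih h3]
    have e1 : qpoch a q (R+1) = (1 - a) * qpoch (a*q) q R := by rw [qpoch_shift, qpoch_succ]
    have e2 : qpoch b q (R+1) = (1 - b) * qpoch (b*q) q R := by rw [qpoch_shift, qpoch_succ]
    rw [e1, e2, qpoch_succ, qpoch_succ, qpoch_succ (a*q), qpoch_succ (b*q)]
    have h4' : 1 - a * b * q * q ^ R ≠ 0 := h4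
    rw [pow_succ]
    clear e1 e2 h h2 h5 h7 h4 ih
    generalize q ^ R = Q at *
    generalize qpoch (a*b*q) q R = Z at *
    generalize qpoch (a*q) q R = X at *
    generalize qpoch (b*q) q R = Y at *
    generalize qpoch q q R = V at *
    generalize hW : 1 - a * b * q * Q = W at *
    generalize hW2 : 1 - q * Q = W2 at *
    field_simp
    rw [← hW, ← hW2]
    ring

/-- The special q-Chu-Vandermonde sum, recursion. -/
noncomputable def cvTerm (q : ℝ) (M N r : ℕ) : ℝ :=
  qpoch (q ^ (-(M:ℤ))) q r * qpoch (q ^ (-(N:ℤ))) q r * q ^ r /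
    (qpoch q q r * qpoch (q ^ (-(M:ℤ) - N)) q r)

lemma cv_rec {q : ℝ} (hq : 0 < q) (hq1 : q ≠ 1) (M N : ℕ) (hN : 0 < N) :
    (1 - q ^ (-((M+1:ℕ):ℤ) - N)) * ∑ r ∈ Finset.range (M+2), cvTerm q (M+1) N r =
     q ^ (-(N:ℤ)) * (1 - q ^ (-((M+1:ℕ):ℤ))) * ∑ r ∈ Finset.range (M+2), cvTerm q M N r := by
  set a := q ^ (-((M+1:ℕ):ℤ)) with ha
  set B := q ^ (-(N:ℤ)) with hB
  have ea : q ^ (-(M:ℤ)) = a * q := by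
    rw [ha, ← zpow_add_one₀ hq.ne']; congr 1; push_cast; ring
  have eab : q ^ (-((M+1:ℕ):ℤ) - N) = a * B := by
    rw [ha, hB, ← zpow_add₀ hq.ne']; congr 1
  have eab' : q ^ (-((M+1+N:ℕ):ℤ)) = a * B := by
    rw [← eab]; congr 1; push_cast; ring
  have eabq : q ^ (-(M:ℤ) - N) = a * B * q := by
    rw [ha, hB, ← zpow_add₀ hq.ne', ← zpow_add_one₀ hq.ne']; congr 1; push_cast; ring
  have eabq' : q ^ (-((M+N:ℕ):ℤ)) = a * B * q := by
    rw [← eabq]; congr 1; push_cast; ring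
  have hz := gosper hq hq1 a B (M+1) (by
    rw [← eabq']; exact qpoch_ne hq hq1 _ _ (by omega))
  have h0 : qpoch (a*q) q (M+1) = 0 := by
    rw [← ea]; exact qpoch_eq_zero hq _ _ (by omega)
  rw [h0, zero_mul, zero_div] at hz
  rw [← sub_eq_zero, Finset.mul_sum, Finset.mul_sum, ← Finset.sum_sub_distrib]
  rw [← mul_zero (1 - B), ← hz, Finset.mul_sum]
  apply Finset.sum_congr rfl
  intro r hr
  have hr := Finset.mem_range.1 hr
  simp only [cvTerm]
  rw [← ha, ← hB, ea, eab, eabq]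
  have n1 : qpoch (a*B) q r ≠ 0 := by rw [← eab']; exact qpoch_ne hq hq1 _ _ (by omega)
  have n2 : qpoch (a*B*q) q r ≠ 0 := by rw [← eabq']; exact qpoch_ne hq hq1 _ _ (by omega)
  have n3 := qpoch_q_ne hq hq1 r
  have s1 := qpoch_shift a q r
  have s2 := qpoch_shift (a*B) q r
  have n4 : 1 - a * B ≠ 0 := by
    rw [← eab']; exact sub_ne_zero.2 (zpow_ne1 hq hq1 (by omega)).symm
  generalize qpoch (a*q) q r = X at *
  generalize qpoch (a) q r = Y at *
  generalize qpoch (a*B*q) q r = Z at *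
  generalize qpoch (a*B) q r = V at *
  generalize qpoch B q r = S at *
  generalize qpoch q q r = T at *
  generalize q ^ r = Q at *
  have : B * (1 - a) * (X * S * Q / (T * Z)) = B * (Y * (1 - a * Q)) * S * Q / (T * Z) := by
    rw [← s1]; ring
  rw [this]
  have : (1 - a*B) * (Y * S * Q / (T * V)) = Y * S * Q * (1 - a * B * Q) / (T * Z) := by
    rw [mul_div_assoc', div_eq_div_iff (by positivity) (by positivity)]
    linear_combination (Y * S * Q * T) * s2
  rw [this]
  ring

lemma one_sub_inv_zpow {q : ℝ} (hq : 0 < q) (j : ℕ) :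
    q ^ j * (1 - q ^ (-(j:ℤ))) = -(1 - q ^ j) := by
  rw [zpow_neg, zpow_natCast]
  have : q ^ j ≠ 0 := by positivity
  field_simp
  ring

lemma qint_eq {q : ℝ} (j : ℕ) : (1 - q) * qint q j = 1 - q ^ j := by
  rw [qint, mul_comm, geom_sum_mul_neg]

lemma qint_pos {q : ℝ} (hq : 0 < q) (j : ℕ) (hj : 0 < j) : 0 < qint q j := by
  rw [qint]
  apply Finset.sum_pos
  · intro i _; positivity
  · simpa using hj.ne'

lemma qfact_pos {q : ℝ} (hq : 0 < q) (j : ℕ) : 0 < qfact q j := by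
  rw [qfact]
  apply Finset.prod_pos
  intro i _
  exact qint_pos hq _ (by omega)

lemma qbinom_pos {q : ℝ} (hq : 0 < q) (a b : ℕ) (h : b ≤ a) : 0 < qbinom q a b := by
  rw [qbinom, if_pos h]
  have := qfact_pos hq a
  have := qfact_pos hq b
  have := qfact_pos hq (a-b)
  positivity

lemma qfact_succ (q : ℝ) (j : ℕ) : qfact q (j+1) = qfact q j * qint q (j+1) := by
  simp [qfact, Finset.prod_range_succ]

lemma cvTerm_eq_zero {q : ℝ} (hq : 0 < q) (M N r : ℕ) (h : M < r ∨ N < r) :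
    cvTerm q M N r = 0 := by
  rw [cvTerm]
  rcases h with h | h <;> (rw [qpoch_eq_zero hq _ _ h]; simp)

lemma cvTerm_zero (q : ℝ) (M N : ℕ) : cvTerm q M N 0 = 1 := by
  simp [cvTerm, qpoch_zero]

lemma cv {q : ℝ} (hq : 0 < q) (hq1 : q ≠ 1) (M N : ℕ) :
    qbinom q (M+N) M * ∑ r ∈ Finset.range (M+1), cvTerm q M N r = 1 := by
  rcases Nat.eq_zero_or_pos N with rfl | hN
  · rw [Finset.sum_range_succ', Finset.sum_eq_zero, cvTerm_zero]
    · have := (qfact_pos hq M).ne'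
      simp [qbinom]
      rw [show qfact q 0 = 1 by simp [qfact]]
      field_simp
    · intro r _
      exact cvTerm_eq_zero hq _ _ _ (Or.inr (by omega))
  induction M with
  | zero =>
    have := (qfact_pos hq N).ne'
    simp [qbinom, cvTerm_zero]
    rw [show qfact q 0 = 1 by simp [qfact]]
    field_simp
  | succ M ih =>
    have h := cv_rec hq hq1 M N hN
    rw [Finset.sum_range_succ (fun r => cvTerm q M N r) (M+1),
      cvTerm_eq_zero hq M N (M+1) (Or.inl (by omega)), add_zero] at h
    rw [qbinom, if_pos (by omega)] at ih ⊢
    rw [show M + 1 + N = (M + N) + 1 by ring, qfact_succ, qfact_succ q M,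
      show M + N + 1 - (M+1) = N by omega]
    rw [show M + N - M = N by omega] at ih
    have p1 := (qfact_pos hq M).ne'
    have p2 := (qfact_pos hq N).ne'
    have p3 := (qfact_pos hq (M+N)).ne'
    have p4 := (qint_pos hq (M+1) (by omega)).ne'
    have p5 := (qint_pos hq (M+N+1) (by omega)).ne'
    have k1 := one_sub_inv_zpow hq (M+1)
    have k2 := one_sub_inv_zpow hq (M+N+1)
    have i1 := qint_eq (q := q) (M+1)
    have i2 := qint_eq (q := q) (M+N+1)
    rw [show (-((M+1:ℕ):ℤ) - N) = -((M+N+1:ℕ):ℤ) by push_cast; ring] at h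
    have hqN : q ^ N * q ^ (-(N:ℤ)) = 1 := by
      rw [zpow_neg, zpow_natCast]; exact mul_inv_cancel₀ (by positivity)
    have hne : 1 - q ≠ 0 := sub_ne_zero.2 hq1.symm
    have key : qint q (M+N+1) * ∑ r ∈ Finset.range (M+1+1), cvTerm q (M+1) N r =
        qint q (M+1) * ∑ r ∈ Finset.range (M+1), cvTerm q M N r := by
      generalize ∑ r ∈ Finset.range (M+1), cvTerm q M N r = S at *
      change _ * ∑ r ∈ Finset.range (M+1+1), cvTerm q (M+1) N r = _ at h
      generalize ∑ r ∈ Finset.range (M+1+1), cvTerm q (M+1) N r = S' at *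
      apply mul_left_cancel₀ hne
      rw [← mul_assoc, i2, ← mul_assoc, i1]
      have e : q ^ (M+N+1) = q ^ (M+1) * q ^ N := by ring
      have h' : q ^ (M+N+1) * (1 - q ^ (-((M+N+1:ℕ):ℤ))) * S' =
        (q ^ N * q ^ (-(N:ℤ))) * (q ^ (M+1) * (1 - q ^ (-((M+1:ℕ):ℤ)))) * S := by
        rw [mul_assoc, h, e]; ring
      rw [k1, k2, hqN] at h'
      linarith
    generalize ∑ r ∈ Finset.range (M+1), cvTerm q M N r = S at *
    generalize ∑ r ∈ Finset.range (M+1+1), cvTerm q (M+1) N r = S' at *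
    field_simp at ih ⊢
    linear_combination qfact q (M+N) * key + qint q (M+1) * ih

/-- telescoping over x -/
lemma sum_x {q : ℝ} (hq : 0 < q) (hq1 : q ≠ 1) (n r : ℕ) (m : ℕ) (hm : 2 * m ≤ n) :
    ∑ x ∈ Finset.range (m+1), qbinom q n x * q ^ x * (qint q (n - 2 * x + 1) / qint q (n - x + 1)) *
      (qpoch (q ^ (-(x:ℤ))) q r * qpoch (q ^ ((x:ℤ) - n - 1)) q r) =
    qbinom q n m * (qpoch (q ^ (-(m:ℤ))) q r * qpoch (q ^ ((m:ℤ) - n)) q r) := by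
  induction m with
  | zero =>
    have := (qint_pos hq (n+1) (by omega)).ne'
    simp only [zero_add, Finset.sum_range_one]
    rcases Nat.eq_zero_or_pos r with rfl | hr
    · simp [qpoch_zero, this]
    · rw [qpoch_eq_zero hq 0 r hr]; simp
  | succ m ih =>
    rw [Finset.sum_range_succ, ih (by omega)]
    have ea : q ^ (-(m:ℤ)) = q ^ (-((m+1:ℕ):ℤ)) * q := by
      rw [← zpow_add_one₀ hq.ne']; congr 1; push_cast; ring
    have eb : q ^ (((m+1:ℕ):ℤ) - n) = q ^ ((m:ℤ) - n) * q := by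
      rw [← zpow_add_one₀ hq.ne']; congr 1; push_cast; ring
    have eb' : ((m+1:ℕ):ℤ) - n - 1 = (m:ℤ) - n := by push_cast; ring
    have eb2 : q ^ ((m:ℤ) - n) = (q ^ (n-m))⁻¹ := by
      rw [← zpow_natCast, ← zpow_neg]; congr 1; omega
    have ea2 : q ^ (-((m+1:ℕ):ℤ)) = (q ^ (m+1))⁻¹ := by
      rw [zpow_neg, zpow_natCast]
    rw [eb', ea, eb]
    have s1 := qpoch_shift (q ^ (-((m+1:ℕ):ℤ))) q r
    have s2 := qpoch_shift (q ^ ((m:ℤ) - n)) q r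
    have n1 : 1 - q ^ (-((m+1:ℕ):ℤ)) ≠ 0 := sub_ne_zero.2 (zpow_ne1 hq hq1 (by omega)).symm
    have n2 : 1 - q ^ ((m:ℤ) - n) ≠ 0 := sub_ne_zero.2 (zpow_ne1 hq hq1 (by omega)).symm
    have t1 := eq_div_of_mul_eq n1 ((mul_comm _ _).trans s1)
    have t2 := eq_div_of_mul_eq n2 ((mul_comm _ _).trans s2)
    rw [t1, t2]
    rw [eb2, ea2] at *
    have hb : qbinom q n m * qint q (n-m) = qbinom q n (m+1) * qint q (m+1) := by
      rw [qbinom, qbinom, if_pos (by omega), if_pos (by omega)]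
      obtain ⟨d, hd⟩ : ∃ d, n = m + 1 + d := ⟨n - (m+1), by omega⟩
      rw [show n - m = d + 1 by omega, show n - (m+1) = d by omega, qfact_succ, qfact_succ]
      have p1 := (qfact_pos hq m).ne'
      have p2 := (qfact_pos hq d).ne'
      have p4 := (qint_pos hq (m+1) (by omega)).ne'
      have p5 := (qint_pos hq (d+1) (by omega)).ne'
      field_simp
    have p5 := (qint_pos hq (n-m) (by omega)).ne'
    have hb' := eq_div_of_mul_eq p5 hb
    rw [hb']
    rw [show n - 2 * (m+1) + 1 = n - 2*m - 1 by omega, show n - (m+1) + 1 = n - m by omega]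
    have hne : 1 - q ≠ 0 := sub_ne_zero.2 hq1.symm
    have j : ∀ j, qint q j = (1 - q^j)/(1-q) := fun j =>
      eq_div_of_mul_eq hne ((mul_comm _ _).trans (qint_eq j))
    have e3 : q ^ (n - m) = q ^ (n - 2*m-1) * q ^ (m+1) := by
      rw [← pow_add]; congr 1; omega
    rw [j (n-m)] at p5
    rw [j (n-m), j (m+1), j (n-2*m-1)]
    rw [e3]
    have w1 : q ^ (m+1) ≠ 0 := by positivity
    have w2 : q ^ (n-2*m-1) ≠ 0 := by positivity
    clear s1 s2 t1 t2 hb hb' j ea eb eb' ea2 eb2 n2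
    generalize q ^ (m+1) = y at *
    generalize q ^ (n-2*m-1) = z at *
    generalize q ^ r = Q at *
    generalize qpoch y⁻¹ q r = X
    generalize qpoch (z*y)⁻¹ q r = Y
    generalize qbinom q n (m+1) = b
    have v1 : 1 - z * y ≠ 0 := by
      intro h; rw [e3, h] at p5; simp at p5
    have v2 : 1 - y ≠ 0 := by
      intro h
      apply n1
      have : y = 1 := by linarith
      rw [this]; simp
    have v3 : y - 1 ≠ 0 := by intro h; apply v2; linarith
    have v4 : z * y - 1 ≠ 0 := by intro h; apply v1; linarith
    have f1 : 1 - y⁻¹ = (y - 1) / y := by field_simp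
    have f2 : 1 - (z*y)⁻¹ = (z * y - 1) / (z * y) := by
      rw [sub_div, div_self (mul_ne_zero w2 w1), one_div]
    rw [f1, f2, show 1 - z * y = -(z * y - 1) by ring]
    generalize hU : z * y - 1 = U at *
    field_simp
    ring

/-- normal form of the term -/
noncomputable def TT (q : ℝ) (M N l κ x r : ℕ) : ℝ :=
  (qpoch (q ^ (-(x:ℤ))) q r * qpoch (q ^ ((x:ℤ) - M - N - l - κ - 1)) q r *
    qpoch (q ^ (-(M:ℤ))) q r * qpoch (q ^ (-(N:ℤ))) q r * q ^ r) /
    (qpoch q q r * qpoch (q ^ (-((M + l : ℕ):ℤ))) q r * qpoch (q ^ (-((N + κ : ℕ):ℤ))) q r *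
      qpoch (q ^ (-(M:ℤ) - N)) q r)

lemma TT_swap (q : ℝ) (M N l κ x r : ℕ) : TT q M N l κ x r = TT q N M κ l x r := by
  simp only [TT]
  rw [show (x:ℤ) - N - M - κ - l - 1 = (x:ℤ) - M - N - l - κ - 1 by ring,
    show (-(N:ℤ) - M) = -(M:ℤ) - N by ring]
  congr 1 <;> ring

lemma TT_eq_zero {q : ℝ} (hq : 0 < q) (M N l κ x r : ℕ) (h : x < r ∨ M < r ∨ N < r) :
    TT q M N l κ x r = 0 := by
  rw [TT]
  rcases h with h | h | h <;> (rw [qpoch_eq_zero hq _ _ h]; simp)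

lemma TT_zero (q : ℝ) (M N l κ x : ℕ) : TT q M N l κ x 0 = 1 := by
  simp [TT, qpoch_zero]

noncomputable def cA (A B C : ℝ) : ℝ := (A - C) * (1 - B) / ((1 - C) * (A - B))

lemma cA_nonneg1 {A B C : ℝ} (h1 : 1 < A) (h2 : A ≤ C) (h3 : C < B) : 0 ≤ cA A B C ∧ 0 ≤ cA B A C := by
  unfold cA
  constructor
  · apply div_nonneg
    · exact mul_nonneg_of_nonpos_of_nonpos (by linarith) (by linarith)
    · exact mul_nonneg_of_nonpos_of_nonpos (by linarith) (by linarith)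
  · apply div_nonneg_of_nonpos
    · exact mul_nonpos_of_nonneg_of_nonpos (by linarith) (by linarith)
    · exact mul_nonpos_of_nonpos_of_nonneg (by linarith) (by linarith)

lemma cA_nonneg2 {A B C : ℝ} (h1 : A < 1) (h2 : C ≤ A) (h3 : B < C) : 0 ≤ cA A B C ∧ 0 ≤ cA B A C := by
  unfold cA
  constructor
  · apply div_nonneg
    · exact mul_nonneg (by linarith) (by linarith)
    · exact mul_nonneg (by linarith) (by linarith)
  · apply div_nonneg_of_nonpos
    · exact mul_nonpos_of_nonpos_of_nonneg (by linarith) (by linarith)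
    · exact mul_nonpos_of_nonneg_of_nonpos (by linarith) (by linarith)

lemma cA_nonneg {q : ℝ} (hq : 0 < q) (hq1 : q ≠ 1) {a b c : ℤ} (h1 : a < 0) (h2 : c ≤ a)
    (h3 : b < c) : 0 ≤ cA (q^a) (q^b) (q^c) ∧ 0 ≤ cA (q^b) (q^a) (q^c) := by
  rcases lt_or_gt_of_ne hq1 with h | h
  · apply cA_nonneg1
    · rw [← zpow_zero q]; exact zpow_lt_zpow_right_of_lt_one₀ hq h h1
    · exact zpow_le_zpow_right_of_le_one₀ hq h.le h2
    · exact zpow_lt_zpow_right_of_lt_one₀ hq h h3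
  · apply cA_nonneg2
    · rw [← zpow_zero q]; exact zpow_lt_zpow_right₀ h h1
    · exact zpow_le_zpow_right₀ h.le h2
    · exact zpow_lt_zpow_right₀ h h3

lemma TT_rec {q : ℝ} (hq : 0 < q) (hq1 : q ≠ 1) (M N l κ x r : ℕ)
    (hx : x + 1 ≤ M + l + 1) (hx2 : x + 1 ≤ N + κ) :
    TT q M N (l+1) κ (x+1) r =
      cA (q ^ (-((x+1:ℕ):ℤ))) (q ^ (((x+1:ℕ):ℤ) - M - N - (l+1:ℕ) - κ - 1)) (q ^ (-((M+(l+1):ℕ):ℤ)))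
        * TT q M N l κ (x+1) r +
      cA (q ^ (((x+1:ℕ):ℤ) - M - N - (l+1:ℕ) - κ - 1)) (q ^ (-((x+1:ℕ):ℤ))) (q ^ (-((M+(l+1):ℕ):ℤ)))
        * TT q M N l κ x r := by
  by_cases hr : M < r ∨ N < r
  · rw [TT_eq_zero hq _ _ _ _ _ _ (Or.inr hr), TT_eq_zero hq _ _ _ _ _ _ (Or.inr hr),
      TT_eq_zero hq _ _ _ _ _ _ (Or.inr hr)]; simp
  push Not at hr
  simp only [TT]
  have eA : q ^ (-(x:ℤ)) = q ^ (-((x+1:ℕ):ℤ)) * q := by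
    rw [← zpow_add_one₀ hq.ne']; congr 1; push_cast; ring
  have eB : q ^ (((x+1:ℕ):ℤ) - M - N - l - κ - 1) =
      q ^ (((x+1:ℕ):ℤ) - M - N - (l+1:ℕ) - κ - 1) * q := by
    rw [← zpow_add_one₀ hq.ne']; congr 1; push_cast; ring
  have eB' : q ^ ((x:ℤ) - M - N - l - κ - 1) =
      q ^ (((x+1:ℕ):ℤ) - M - N - (l+1:ℕ) - κ - 1) := by
    congr 1; push_cast; ring
  have eC : q ^ (-((M+l:ℕ):ℤ)) = q ^ (-((M+(l+1):ℕ):ℤ)) * q := by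
    rw [← zpow_add_one₀ hq.ne']; congr 1; push_cast; ring
  have c1 : qpoch (q ^ (-((M+(l+1):ℕ):ℤ))) q r ≠ 0 := qpoch_ne hq hq1 _ _ (by omega)
  have c2 : qpoch (q ^ (-((M+l:ℕ):ℤ))) q r ≠ 0 := qpoch_ne hq hq1 _ _ (by omega)
  have c3 : qpoch (q ^ (-((N+κ:ℕ):ℤ))) q r ≠ 0 := qpoch_ne hq hq1 _ _ (by omega)
  have c4 : qpoch (q ^ (-(M:ℤ) - N)) q r ≠ 0 := by
    rw [show -(M:ℤ) - N = -((M+N:ℕ):ℤ) by push_cast; ring]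
    exact qpoch_ne hq hq1 _ _ (by omega)
  have c5 := qpoch_q_ne hq hq1 r
  rw [eC] at c2
  rw [eA, eB, eB', eC]
  have nA : 1 - q ^ (-((x+1:ℕ):ℤ)) ≠ 0 := sub_ne_zero.2 (zpow_ne1 hq hq1 (by omega)).symm
  have nB : 1 - q ^ (((x+1:ℕ):ℤ) - M - N - (l+1:ℕ) - κ - 1) ≠ 0 :=
    sub_ne_zero.2 (zpow_ne1 hq hq1 (by omega)).symm
  have nC : 1 - q ^ (-((M+(l+1):ℕ):ℤ)) ≠ 0 := sub_ne_zero.2 (zpow_ne1 hq hq1 (by omega)).symm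
  have nAB : q ^ (-((x+1:ℕ):ℤ)) - q ^ (((x+1:ℕ):ℤ) - M - N - (l+1:ℕ) - κ - 1) ≠ 0 :=
    sub_ne_zero.2 ((zpow_right_injective₀ hq hq1).ne (by omega))
  generalize q ^ (-((x+1:ℕ):ℤ)) = A at *
  generalize q ^ (((x+1:ℕ):ℤ) - M - N - (l+1:ℕ) - κ - 1) = B at *
  generalize q ^ (-((M+(l+1):ℕ):ℤ)) = C at *
  have s1 := qpoch_shift A q r
  have s2 := qpoch_shift B q r
  have s3 := qpoch_shift C q r
  have nCQ : 1 - C * q ^ r ≠ 0 := by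
    intro h; rw [h] at s3
    rw [mul_zero] at s3
    exact mul_ne_zero nC c2 s3
  rw [eq_div_of_mul_eq nA ((mul_comm _ _).trans s1), eq_div_of_mul_eq nB ((mul_comm _ _).trans s2),
    eq_div_of_mul_eq nC ((mul_comm _ _).trans s3)]
  clear s1 s2 s3 c2 eA eB eB' eC
  generalize qpoch A q r = PA at *
  generalize qpoch B q r = PB at *
  generalize qpoch C q r = PC at *
  generalize qpoch q q r = P1 at *
  generalize qpoch (q ^ (-((N+κ:ℕ):ℤ))) q r = P2 at *
  generalize qpoch (q ^ (-(M:ℤ) - N)) q r = P3 at *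
  generalize qpoch (q ^ (-(M:ℤ))) q r = P4 at *
  generalize qpoch (q ^ (-(N:ℤ))) q r = P5 at *
  generalize q ^ r = Q at *
  have id1 : 1 - C * Q = ((A - C) * (1 - B * Q) - (B - C) * (1 - A * Q)) / (A - B) := by
    rw [eq_div_iff nAB]; ring
  have nBA : B - A ≠ 0 := by intro h; apply nAB; linarith
  have id2 : cA A B C * ((1 - B * Q) / (1 - B)) + cA B A C * ((1 - A*Q)/(1 - A)) =
      (1 - C * Q) / (1 - C) := by
    rw [id1, cA, cA, show B - A = -(A - B) by ring]
    field_simp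
    ring
  calc _ = ((1 - C * Q) / (1 - C)) * (PA * PB * P4 * P5 * Q / (P1 * (PC * (1 - C*Q) / (1 - C)) * P2 * P3)) := by
        generalize 1 - C * Q = W at *
        field_simp
    _ = _ := by
        rw [← id2]; ring

noncomputable def WW (q : ℝ) (M N l κ x : ℕ) : ℝ :=
  ∑ r ∈ Finset.range (M + N + 1), TT q M N l κ x r

lemma WW_swap (q : ℝ) (M N l κ x : ℕ) : WW q M N l κ x = WW q N M κ l x := by
  rw [WW, WW, add_comm M N]
  exact Finset.sum_congr rfl fun r _ => TT_swap _ _ _ _ _ _ _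

lemma WW_zero {q : ℝ} (hq : 0 < q) (M N l κ : ℕ) : WW q M N l κ 0 = 1 := by
  rw [WW, Finset.sum_range_succ', TT_zero, Finset.sum_eq_zero, zero_add]
  intro r _
  exact TT_eq_zero hq _ _ _ _ _ _ (Or.inl (by omega))

lemma WW_step {q : ℝ} (hq : 0 < q) (hq1 : q ≠ 1) (M N l κ : ℕ)
    (ih : ∀ x, x ≤ M + l → x ≤ N + κ → 0 ≤ WW q M N l κ x) :
    ∀ x, x ≤ M + (l+1) → x ≤ N + κ → 0 ≤ WW q M N (l+1) κ x := by
  intro x hx hx2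
  rcases x with _ | x
  · rw [WW_zero hq]; norm_num
  have hn := cA_nonneg hq hq1 (a := -((x+1:ℕ):ℤ))
    (b := ((x+1:ℕ):ℤ) - M - N - (l+1:ℕ) - κ - 1) (c := -((M+(l+1):ℕ):ℤ))
    (by omega) (by omega) (by omega)
  rw [WW, Finset.sum_congr rfl fun r _ => TT_rec hq hq1 M N l κ x r (by omega) hx2,
    Finset.sum_add_distrib, ← Finset.mul_sum, ← Finset.mul_sum]
  apply add_nonneg
  · rcases Nat.lt_or_ge (M+l) (x+1) with h | h
    · have : x + 1 = M + (l+1) := by omega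
      rw [this, cA]; simp
    · exact mul_nonneg hn.1 (ih _ h hx2)
  · exact mul_nonneg hn.2 (ih _ (by omega) (by omega))

lemma WW_base {q : ℝ} (hq : 0 < q) (hq1 : q ≠ 1) (M N x : ℕ) (h1 : x ≤ M) (h2 : x ≤ N) :
    0 ≤ WW q M N 0 0 x := by
  rcases x with _ | x
  · rw [WW_zero hq]; norm_num
  apply le_of_eq
  have e : q ^ (-(M:ℤ) - N) = q ^ (-((x+1:ℕ):ℤ)) * q ^ (((x+1:ℕ):ℤ) - M - N - 1) * q := by
    rw [← zpow_add₀ hq.ne', ← zpow_add_one₀ hq.ne']; congr 1; push_cast; ring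
  have e' : q ^ (-((M+N:ℕ):ℤ)) = q ^ (-(M:ℤ) - N) := by congr 1; push_cast; ring
  have g := gosper hq hq1 (q ^ (-((x+1:ℕ):ℤ))) (q ^ (((x+1:ℕ):ℤ) - M - N - 1)) (x+1)
    (by rw [← e, ← e']; exact qpoch_ne hq hq1 _ _ (by omega))
  have eA : q ^ (-(x:ℤ)) = q ^ (-((x+1:ℕ):ℤ)) * q := by
    rw [← zpow_add_one₀ hq.ne']; congr 1; push_cast; ring
  rw [← eA, qpoch_eq_zero hq x (x+1) (by omega), zero_mul, zero_div] at g
  rw [← g, WW]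
  have hs : Finset.range (x+1+1) ⊆ Finset.range (M+N+1) := by
    intro i; simp only [Finset.mem_range]; omega
  rw [← Finset.sum_subset hs]
  · apply Finset.sum_congr rfl
    intro r hr
    have hr := Finset.mem_range.1 hr
    rw [← e, TT]
    have c1 : qpoch (q ^ (-(M:ℤ))) q r ≠ 0 := qpoch_ne hq hq1 _ _ (by omega)
    have c2 : qpoch (q ^ (-(N:ℤ))) q r ≠ 0 := qpoch_ne hq hq1 _ _ (by omega)
    have c3 : qpoch (q ^ (-(M:ℤ) - N)) q r ≠ 0 := by
      rw [← e']; exact qpoch_ne hq hq1 _ _ (by omega)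
    have c5 := qpoch_q_ne hq hq1 r
    simp only [add_zero, Nat.cast_zero, sub_zero]
    field_simp
  · intro r _ hr
    exact TT_eq_zero hq _ _ _ _ _ _ (Or.inl (by simpa using hr))

lemma WW_nonneg {q : ℝ} (hq : 0 < q) (hq1 : q ≠ 1) (M N l κ : ℕ) :
    ∀ x, x ≤ M + l → x ≤ N + κ → 0 ≤ WW q M N l κ x := by
  induction l with
  | succ l ih => exact WW_step hq hq1 M N l κ ih
  | zero =>
    induction κ with
    | zero => exact fun x h1 h2 => WW_base hq hq1 M N x h1 h2
    | succ κ ih =>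
      intro x h1 h2
      rw [WW_swap]
      exact WW_step hq hq1 N M κ 0 (fun x h1 h2 => by rw [WW_swap]; exact ih x h2 h1) x h2 h1

lemma hyp_sum {q : ℝ} (hq : 0 < q) (M N l κ x : ℕ) (R : ℕ) (hR : min x (min M N) ≤ R) :
    ∑ r ∈ Finset.range (R + 1),
      hypTerm q (M+N+l+κ) (M+l) M N (-(x : ℤ)) ((x : ℤ) - (M+N+l+κ:ℕ) - 1) r = WW q M N l κ x := by
  have h : ∀ r, hypTerm q (M+N+l+κ) (M+l) M N (-(x : ℤ)) ((x : ℤ) - (M+N+l+κ:ℕ) - 1) r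
      = TT q M N l κ x r := by
    intro r
    rw [hypTerm, TT, show (x : ℤ) - (M+N+l+κ:ℕ) - 1 = (x:ℤ) - M - N - l - κ - 1 by push_cast; ring,
      show ((M+l:ℕ):ℤ) - (M+N+l+κ:ℕ) = -((N+κ:ℕ):ℤ) by push_cast; ring]
  simp only [h, WW]
  have key : ∀ R, min x (min M N) ≤ R → ∑ r ∈ Finset.range (R+1), TT q M N l κ x r =
      ∑ r ∈ Finset.range (min x (min M N)+1), TT q M N l κ x r := by
    intro R hR
    symm
    apply Finset.sum_subset
    · intro i; simp only [Finset.mem_range]; omega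
    · intro r _ hr
      apply TT_eq_zero hq
      simp only [Finset.mem_range] at hr
      omega
  rw [key R hR, key (M+N) (by omega)]

theorem qRacah_distribution_q_near_one
    (n m k l : ℕ) (hm : m ≤ n / 2) (hk : k ≤ n)
    (hl : m + k ≤ n + l) (hlm : l ≤ m) (hlk : l ≤ k) :
    ∃ ε : ℝ, 0 < ε ∧ ε < 1 ∧
      ∀ q : ℝ, 0 < |q - 1| → |q - 1| < ε →
        (∀ x ≤ m, 0 ≤ pq q n m k l x) ∧
          ∑ x ∈ Finset.range (m + 1), pq q n m k l x = 1 := by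
  refine ⟨1/2, by norm_num, by norm_num, ?_⟩
  intro q h0 h1
  have hq : 0 < q := by have := (abs_lt.1 h1).1; linarith
  have hq1 : q ≠ 1 := by rintro rfl; simp at h0
  obtain ⟨M, rfl⟩ : ∃ M, m = M + l := ⟨m - l, by omega⟩
  obtain ⟨κ, rfl⟩ : ∃ κ, k = l + κ := ⟨k - l, by omega⟩
  obtain ⟨N, rfl⟩ : ∃ N, n = M + N + l + κ := ⟨n - (M + l + κ), by omega⟩
  have hM : M + l - l = M := by omega
  have hN : M + N + l + κ + l - (M + l) - (l + κ) = N := by omega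
  have hMN : M + N + l + κ - (l + κ) = M + N := by omega
  constructor
  · intro x hx
    rw [pq, hM, hN, hMN, hyp_sum hq _ _ _ _ _ _ le_rfl]
    have b1 := qbinom_pos hq (M+N) M (by omega)
    have b2 := qbinom_pos hq (M+N+l+κ) x (by omega)
    have b3 := qbinom_pos hq (M+N+l+κ) (M+l) (by omega)
    have b4 := qint_pos hq (M+N+l+κ - 2*x+1) (by omega)
    have b5 := qint_pos hq (M+N+l+κ - x+1) (by omega)
    have := WW_nonneg hq hq1 M N l κ x hx (by omega)
    positivity
  · have b3 := (qbinom_pos hq (M+N+l+κ) (M+l) (by omega)).ne'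
    rw [← cv hq hq1 M N, Finset.mul_sum]
    have e1 : ∀ x, pq q (M+N+l+κ) (M+l) (l+κ) l x = ∑ r ∈ Finset.range (M+1),
        qbinom q (M+N) M * ((qbinom q (M+N+l+κ) (M+l))⁻¹ *
        (qpoch (q ^ (-(M : ℤ))) q r * qpoch (q ^ (-(N : ℤ))) q r * q ^ r /
        (qpoch q q r * qpoch (q ^ (-((M+l:ℕ) : ℤ))) q r *
          qpoch (q ^ (((M+l:ℕ) : ℤ) - (M+N+l+κ:ℕ))) q r * qpoch (q ^ (-(M : ℤ) - N)) q r))) *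
        (qbinom q (M+N+l+κ) x * q ^ x *
          (qint q ((M+N+l+κ) - 2 * x + 1) / qint q ((M+N+l+κ) - x + 1)) *
      (qpoch (q ^ (-(x:ℤ))) q r * qpoch (q ^ ((x:ℤ) - (M+N+l+κ:ℕ) - 1)) q r)) := by
      intro x
      rw [pq, hM, hN, hMN, hyp_sum hq _ _ _ _ _ _ le_rfl,
        ← hyp_sum hq M N l κ x M (by omega), Finset.mul_sum]
      apply Finset.sum_congr rfl
      intro r _
      rw [hypTerm]
      ring
    simp only [e1]
    rw [Finset.sum_comm]
    apply Finset.sum_congr rfl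
    intro r hr
    rw [← Finset.mul_sum, sum_x hq hq1 _ r (M+l) (by omega)]
    have hr := Finset.mem_range.1 hr
    by_cases hrN : N < r
    · rw [cvTerm_eq_zero hq _ _ _ (Or.inr hrN), qpoch_eq_zero hq _ _ hrN]; simp
    have c1 : qpoch (q ^ (-((M+l:ℕ):ℤ))) q r ≠ 0 := qpoch_ne hq hq1 _ _ (by omega)
    have c2 : qpoch (q ^ (((M+l:ℕ):ℤ) - (M+N+l+κ:ℕ))) q r ≠ 0 := by
      rw [show ((M+l:ℕ):ℤ) - (M+N+l+κ:ℕ) = -((N+κ:ℕ):ℤ) by push_cast; ring]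
      exact qpoch_ne hq hq1 _ _ (by omega)
    rw [cvTerm, mul_assoc]
    congr 1
    generalize qpoch (q ^ (-((M+l:ℕ):ℤ))) q r = X at *
    generalize qpoch (q ^ (((M+l:ℕ):ℤ) - (M+N+l+κ:ℕ))) q r = Y at *
    generalize qbinom q (M+N+l+κ) (M+l) = Z at *
    field_simp
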